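/- arXiv:1407.2192 — 3 statements merged into one kernel-verified Lean document; each statement's English description precedes it below -/
import Mathlib

section
/- Let (Ω, F, Q) be a probability space with a filtration (F_k)_{k∈ℕ}, Δt > 0, and let (N_k)_{k≥1} be ℕ-valued random variables such that each N_k is F_k-measurable, is independent of F_{k−1}, and has law Poisson(Δt) under Q. Let (λ_k)_{k≥1} be real-valued random variables with each λ_k F_{k−1}-measurable and 0 < λ_k ≤ C for a constant C. Define Z_0 := 1 and Z_k := Z_{k−1} · λ_k^{N_k} · exp(−(λ_k−1)·Δt). Then (Z_k)_{k∈ℕ} is a martingale with respect to (F_k) under Q, and E_Q[Z_k] = 1 for every k. (This is the discrete-time analogue of the first assertion of the paper's Theorem 1: the likelihood ratio Z_t = exp(∫₀ᵗ ln λ_s dY_s − ∫₀ᵗ (λ_s−1) ds) with predictable intensity λ is a Q-martingale with E_Q[Z_t] = 1.) -/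
open MeasureTheory ProbabilityTheory Real

lemma poisson_weight_tsum (x r : ℝ) (hx : 0 < x) (hr : 0 < r) :
    ∑' n : ℕ, ENNReal.ofReal (x ^ n * Real.exp (-(x - 1) * r)) *
      ENNReal.ofReal (Real.exp (-r) * r ^ n / (n.factorial : ℝ)) = 1 := by
  have h1 : HasSum (fun n : ℕ => (x ^ n * Real.exp (-(x - 1) * r)) *
      (Real.exp (-r) * r ^ n / (n.factorial : ℝ))) 1 := by
    have h := (NormedSpace.expSeries_div_hasSum_exp (𝔸 := ℝ) (x * r)).mul_left (Real.exp (-(x * r)))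
    rw [← Real.exp_eq_exp_ℝ, ← Real.exp_add, neg_add_cancel, Real.exp_zero] at h
    refine Eq.mp (congrArg (fun f => HasSum f (1 : ℝ)) (funext fun n => ?_)) h
    have : Real.exp (-(x * r)) = Real.exp (-(x - 1) * r) * Real.exp (-r) := by
      rw [← Real.exp_add]; congr 1; ring
    rw [this, mul_pow]; ring
  have h2 := ENNReal.ofReal_tsum_of_nonneg (fun n => by positivity) h1.summable
  rw [h1.tsum_eq, ENNReal.ofReal_one] at h2
  rw [h2]
  refine tsum_congr fun n => ?_
  rw [← ENNReal.ofReal_mul (by positivity)]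

lemma lintegral_step {Ω : Type*} (m : MeasurableSpace Ω) [m0 : MeasurableSpace Ω]
    (Q : Measure Ω) [IsProbabilityMeasure Q] (hm : m ≤ m0)
    (r : ℝ) (hr : 0 < r) (N : Ω → ℕ) (hN : Measurable N)
    (hind : Indep (MeasurableSpace.comap N inferInstance) m Q)
    (hlaw : Q.map N = poissonMeasure r.toNNReal)
    (x : Ω → ℝ) (hx : Measurable[m] x) (hpos : ∀ ω, 0 < x ω)
    (A : Ω → ENNReal) (hA : Measurable[m] A) :
    ∫⁻ ω, A ω * ENNReal.ofReal (x ω ^ N ω * Real.exp (-(x ω - 1) * r)) ∂Q = ∫⁻ ω, A ω ∂Q := by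
  let g : ℕ → Ω → ENNReal := fun n ω =>
    A ω * ENNReal.ofReal (x ω ^ n * Real.exp (-(x ω - 1) * r))
  have hg : ∀ n, Measurable[m] (g n) := fun n => by
    refine Measurable.mul hA (Measurable.ennreal_ofReal ?_)
    exact (hx.pow_const n).mul (((hx.sub_const 1).neg.mul_const r).exp)
  let I : ℕ → Ω → ENNReal := fun n => (N ⁻¹' {n}).indicator 1
  have hIm : ∀ n, Measurable[MeasurableSpace.comap N inferInstance] (I n) := fun n => by
    have hs : MeasurableSet[MeasurableSpace.comap N inferInstance] (N ⁻¹' {n}) :=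
      ⟨{n}, measurableSet_singleton n, rfl⟩
    exact Measurable.indicator (@measurable_const _ _ _ (_) 1) hs
  have hQ : ∀ n, Q (N ⁻¹' {n}) =
      ENNReal.ofReal (Real.exp (-r) * r ^ n / (n.factorial : ℝ)) := fun n => by
    rw [← Measure.map_apply hN (measurableSet_singleton n), hlaw, poissonMeasure_singleton,
      Real.coe_toNNReal _ hr.le]
  have e1 : ∀ ω, A ω * ENNReal.ofReal (x ω ^ N ω * Real.exp (-(x ω - 1) * r))
      = ∑' n, I n ω * g n ω := fun ω => by
    rw [tsum_eq_single (N ω)]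
    · simp [I, g]
    · intro n hn
      simp [I, hn.symm]
  have hle := hN.comap_le
  simp_rw [e1]
  rw [lintegral_tsum (f := fun n ω => I n ω * g n ω) fun n =>
    (((hIm n).mono hle le_rfl).mul ((hg n).mono hm le_rfl)).aemeasurable]
  have e2 : ∀ n, ∫⁻ ω, I n ω * g n ω ∂Q = ∫⁻ ω, g n ω * Q (N ⁻¹' {n}) ∂Q := fun n => by
    rw [lintegral_mul_eq_lintegral_mul_lintegral_of_independent_measurableSpace hle hm hind
      (hIm n) (hg n), lintegral_mul_const _ ((hg n).mono hm le_rfl), mul_comm]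
    congr 1
    exact lintegral_indicator_one (hN (measurableSet_singleton n))
  simp_rw [e2]
  rw [← lintegral_tsum (f := fun n ω => g n ω * Q (N ⁻¹' {n})) fun n => (((hg n).mono hm le_rfl).mul_const _).aemeasurable]
  refine lintegral_congr fun ω => ?_
  simp_rw [hQ, g, mul_assoc]
  rw [ENNReal.tsum_mul_left]
  have := poisson_weight_tsum (x ω) r (hpos ω) hr
  rw [this, mul_one]



/-- Discrete-time analogue of the first assertion of Theorem 1 of the paper: the
likelihood ratio `Z_k = ∏_{i≤k} λ_i^{N_i} exp(−(λ_i−1)Δt)` built from unit-rate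
(mean `Δt`) Poisson increments `N_k` and a predictable, positive, bounded intensity
`λ_k` is a `Q`-martingale with `E_Q[Z_k] = 1` for every `k`. -/
theorem likelihood_ratio_martingale {Ω : Type*} [m0 : MeasurableSpace Ω]
    (Q : Measure Ω) [IsProbabilityMeasure Q] (F : Filtration ℕ m0)
    (Δt : ℝ) (hΔt : 0 < Δt)
    (N : ℕ → Ω → ℕ)
    (hNmeas : ∀ k, 1 ≤ k → Measurable[F k] (N k))
    (hNindep : ∀ k, 1 ≤ k →
      Indep (MeasurableSpace.comap (N k) inferInstance) (F (k - 1)) Q)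
    (hNlaw : ∀ k, 1 ≤ k → Q.map (N k) = poissonMeasure Δt.toNNReal)
    (C : ℝ) (lam : ℕ → Ω → ℝ)
    (hlammeas : ∀ k, 1 ≤ k → Measurable[F (k - 1)] (lam k))
    (hlampos : ∀ k, 1 ≤ k → ∀ ω, 0 < lam k ω)
    (hlambdd : ∀ k, 1 ≤ k → ∀ ω, lam k ω ≤ C)
    (Z : ℕ → Ω → ℝ)
    (hZ0 : ∀ ω, Z 0 ω = 1)
    (hZrec : ∀ k, 1 ≤ k → ∀ ω,
      Z k ω = Z (k - 1) ω * lam k ω ^ N k ω * Real.exp (-(lam k ω - 1) * Δt)) :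
    Martingale Z F Q ∧ ∀ k, ∫ ω, Z k ω ∂Q = 1 := by
  have hpos : ∀ k ω, 0 < Z k ω := by
    intro k
    induction k with
    | zero => intro ω; rw [hZ0]; exact one_pos
    | succ k ih =>
      intro ω
      rw [hZrec (k + 1) (by omega)]
      have h1 := ih ω
      have h2 := hlampos (k + 1) (by omega) ω
      simp only [Nat.add_sub_cancel]
      positivity
  have hmeas : ∀ k, Measurable[F k] (Z k) := by
    intro k
    induction k with
    | zero =>
      have : Z 0 = fun _ => 1 := funext hZ0
      rw [this]; exact measurable_const
    | succ k ih =>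
      have : Z (k + 1) = fun ω => Z k ω * lam (k + 1) ω ^ N (k + 1) ω *
          Real.exp (-(lam (k + 1) ω - 1) * Δt) := funext (hZrec (k + 1) (by omega))
      rw [this]
      have hl : Measurable[F (k + 1)] (lam (k + 1)) :=
        (hlammeas (k + 1) (by omega)).mono (F.mono (by omega)) le_rfl
      have hn := hNmeas (k + 1) (by omega)
      have hz : Measurable[F (k + 1)] (Z k) := ih.mono (F.mono (by omega)) le_rfl
      exact (hz.mul (hl.pow hn)).mul (((hl.sub_const 1).neg.mul_const Δt).exp)
  have hset : ∀ k (s : Set Ω), MeasurableSet[F k] s →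
      ∫⁻ ω in s, ENNReal.ofReal (Z (k + 1) ω) ∂Q = ∫⁻ ω in s, ENNReal.ofReal (Z k ω) ∂Q := by
    intro k s hs
    have hs0 := F.le k s hs
    have h := lintegral_step (F k) Q (F.le k) Δt hΔt (N (k + 1))
      ((hNmeas (k + 1) (by omega)).mono (F.le _) le_rfl) (hNindep (k + 1) (by omega))
      (hNlaw (k + 1) (by omega)) (lam (k + 1)) (hlammeas (k + 1) (by omega))
      (hlampos (k + 1) (by omega)) (s.indicator fun ω => ENNReal.ofReal (Z k ω))
      (Measurable.indicator (Measurable.ennreal_ofReal (hmeas k)) hs)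
    rw [lintegral_indicator hs0] at h
    rw [← h, ← lintegral_indicator hs0]
    refine lintegral_congr fun ω => ?_
    by_cases hω : ω ∈ s
    · simp only [Set.indicator_of_mem hω]
      rw [hZrec (k + 1) (by omega), ← ENNReal.ofReal_mul (hpos k ω).le, mul_assoc]
      rfl
    · simp [Set.indicator_of_notMem hω]
  have hone : ∀ k, ∫⁻ ω, ENNReal.ofReal (Z k ω) ∂Q = 1 := by
    intro k
    induction k with
    | zero => simp [hZ0]
    | succ k ih =>
      have := hset k Set.univ MeasurableSet.univ
      rw [Measure.restrict_univ] at this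
      rw [this, ih]
  have hm0 : ∀ k, Measurable (Z k) := fun k => (hmeas k).mono (F.le k) le_rfl
  have hint : ∀ k, Integrable (Z k) Q := by
    intro k
    refine ⟨(hm0 k).aestronglyMeasurable, ?_⟩
    rw [hasFiniteIntegral_iff_ofReal (Filter.Eventually.of_forall fun ω => (hpos k ω).le), hone k]
    exact ENNReal.one_lt_top
  refine ⟨martingale_of_setIntegral_eq_succ (fun k => (hmeas k).stronglyMeasurable) hint ?_, ?_⟩
  · intro k s hs
    rw [integral_eq_lintegral_of_nonneg_ae (Filter.Eventually.of_forall fun ω => (hpos k ω).le)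
        (hm0 k).aestronglyMeasurable,
      integral_eq_lintegral_of_nonneg_ae (Filter.Eventually.of_forall fun ω => (hpos (k + 1) ω).le)
        (hm0 (k + 1)).aestronglyMeasurable, hset k s hs]
  · intro k
    rw [integral_eq_lintegral_of_nonneg_ae (Filter.Eventually.of_forall fun ω => (hpos k ω).le)
        (hm0 k).aestronglyMeasurable, hone k]
    rfl
end

section
/- Let (Ω, F, Q) be a probability space with a filtration (F_k)_{k∈ℕ}, Δt > 0, and let (N_k)_{k≥1} be ℕ-valued random variables such that each N_k is F_k-measurable, is independent of F_{k−1}, and has law Poisson(Δt) under Q. Let (λ_k)_{k≥1} satisfy: each λ_k is F_{k−1}-measurable and 0 < λ_k ≤ C for a constant C. Fix n ≥ 1, define Z_n := ∏_{k=1}^n λ_k^{N_k} · exp(−(λ_k−1)·Δt) and the probability measure P := Q.withDensity Z_n. Then the compensated process M_k := ∑_{i=1}^k (N_i − λ_i·Δt), for 0 ≤ k ≤ n, is a martingale with respect to (F_k) under P. (This is the discrete-time analogue of the second assertion of the paper's Theorem 1: under the changed measure dP = Z dQ, the innovation Y_t − ∫₀ᵗ λ_s ds becomes a P-martingale.) 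-/
open MeasureTheory ProbabilityTheory Real
open scoped ENNReal

/-- Conditioning on an independent sigma-algebra, for a discrete variable. -/
theorem aux_key {Ω : Type*} {m' m0 : MeasurableSpace Ω} (hm : m' ≤ m0)
    (Q : Measure Ω) (N : Ω → ℕ) (hN : Measurable N)
    (hind : Indep (MeasurableSpace.comap N inferInstance) m' Q)
    (g : ℕ → Ω → ℝ≥0∞) (hg : ∀ j, Measurable[m'] (g j)) :
    ∫⁻ ω, g (N ω) ω ∂Q = ∫⁻ ω, ∑' j, Q.map N {j} * g j ω ∂Q := by
  have hg0 : ∀ j, Measurable (g j) := fun j => (hg j).mono hm le_rfl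
  have hs : ∀ j, MeasurableSet (N ⁻¹' {j}) := fun j => hN (measurableSet_singleton j)
  have h1 : ∀ ω, g (N ω) ω = ∑' j, (N ⁻¹' {j}).indicator (fun _ => (1 : ℝ≥0∞)) ω * g j ω := by
    intro ω
    rw [tsum_eq_single (N ω)]
    · simp
    · intro j hj
      have : ω ∉ N ⁻¹' {j} := fun h => hj (by simpa using h.symm)
      simp [Set.indicator_of_notMem this]
  simp_rw [h1]
  rw [lintegral_tsum (f := fun j ω => (N ⁻¹' {j}).indicator (fun _ => (1 : ℝ≥0∞)) ω * g j ω)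
      (fun j => ((measurable_const.indicator (hs j)).mul (hg0 j)).aemeasurable),
    lintegral_tsum (f := fun j ω => Q.map N {j} * g j ω) (fun j => (measurable_const.mul (hg0 j)).aemeasurable)]
  refine tsum_congr fun j => ?_
  rw [lintegral_mul_eq_lintegral_mul_lintegral_of_independent_measurableSpace
    (Mf := MeasurableSpace.comap N inferInstance) (Mg := m') hN.comap_le hm hind
    (by
      refine Measurable.indicator measurable_const ?_
      exact ⟨{j}, measurableSet_singleton j, rfl⟩) (hg j),
    lintegral_const_mul _ (hg0 j), Measure.map_apply hN (measurableSet_singleton j)]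
  congr 1
  rw [lintegral_indicator (hs j)]
  simp

theorem aux_pmf (Δt l : ℝ) (hΔt : 0 < Δt) (hl : 0 < l) (j : ℕ) :
    poissonMeasure Δt.toNNReal {j} * ENNReal.ofReal (l ^ j * Real.exp (-(l - 1) * Δt))
      = ENNReal.ofReal (Real.exp (-(l * Δt)) * (l * Δt) ^ j / (j.factorial : ℝ)) := by
  rw [poissonMeasure_singleton, ← ENNReal.ofReal_mul (by positivity),
    Real.coe_toNNReal _ hΔt.le]
  congr 1
  have : Real.exp (-(l * Δt)) = Real.exp (-Δt) * Real.exp (-(l - 1) * Δt) := by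
    rw [← Real.exp_add]; congr 1; ring
  rw [this, mul_pow]; ring

theorem aux_hasSum (r : ℝ) (hr : 0 < r) :
    HasSum (fun j : ℕ => Real.exp (-r) * r ^ j / (j.factorial : ℝ)) 1 := by
  have := hasSum_one_poissonMeasure r.toNNReal
  rwa [Real.coe_toNNReal _ hr.le] at this

theorem aux_sum_one (Δt l : ℝ) (hΔt : 0 < Δt) (hl : 0 < l) :
    ∑' j, poissonMeasure Δt.toNNReal {j} *
      ENNReal.ofReal (l ^ j * Real.exp (-(l - 1) * Δt)) = 1 := by
  simp_rw [aux_pmf Δt l hΔt hl]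
  have h := aux_hasSum (l * Δt) (by positivity)
  rw [← ENNReal.ofReal_tsum_of_nonneg (fun j => by positivity) h.summable, h.tsum_eq]
  simp

theorem aux_sum_mean (Δt l : ℝ) (hΔt : 0 < Δt) (hl : 0 < l) :
    ∑' j : ℕ, poissonMeasure Δt.toNNReal {j} *
      (ENNReal.ofReal (l ^ j * Real.exp (-(l - 1) * Δt)) * (j : ℝ≥0∞))
      = ENNReal.ofReal (l * Δt) := by
  simp_rw [← mul_assoc, aux_pmf Δt l hΔt hl]
  have h := (aux_hasSum (l * Δt) (by positivity))
  rw [tsum_eq_zero_add' ENNReal.summable]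
  have h2 : ∀ j : ℕ, ENNReal.ofReal (Real.exp (-(l * Δt)) * (l * Δt) ^ (j + 1) /
      ((j + 1).factorial : ℝ)) * ((j + 1 : ℕ) : ℝ≥0∞) =
      ENNReal.ofReal (l * Δt) *
        ENNReal.ofReal (Real.exp (-(l * Δt)) * (l * Δt) ^ j / (j.factorial : ℝ)) := by
    intro j
    rw [← ENNReal.ofReal_natCast (j + 1), ← ENNReal.ofReal_mul (by positivity),
      ← ENNReal.ofReal_mul (by positivity)]
    congr 1
    rw [Nat.factorial_succ]
    push_cast
    have : (j.factorial : ℝ) ≠ 0 := by positivity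
    field_simp
    ring
  simp_rw [h2]
  rw [ENNReal.tsum_mul_left,
    ← ENNReal.ofReal_tsum_of_nonneg (fun j => by positivity) h.summable, h.tsum_eq]
  simp

theorem aux_step {Ω : Type*} {m' m0 : MeasurableSpace Ω} (hm : m' ≤ m0)
    (Q : Measure Ω) (N : Ω → ℕ) (hN : Measurable N)
    (hind : Indep (MeasurableSpace.comap N inferInstance) m' Q)
    (Δt : ℝ) (hΔt : 0 < Δt) (hlaw : Q.map N = poissonMeasure Δt.toNNReal)
    (lam : Ω → ℝ) (hlam : Measurable[m'] lam) (hpos : ∀ ω, 0 < lam ω)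
    (W : Ω → ℝ≥0∞) (hW : Measurable[m'] W) :
    (∫⁻ ω, W ω * ENNReal.ofReal (lam ω ^ N ω * Real.exp (-(lam ω - 1) * Δt)) ∂Q = ∫⁻ ω, W ω ∂Q) ∧
    (∫⁻ ω, W ω * (ENNReal.ofReal (lam ω ^ N ω * Real.exp (-(lam ω - 1) * Δt)) * (N ω : ℝ≥0∞)) ∂Q
      = ∫⁻ ω, W ω * ENNReal.ofReal (lam ω * Δt) ∂Q) := by
  have hL : ∀ j : ℕ, Measurable[m']
      (fun ω => ENNReal.ofReal (lam ω ^ j * Real.exp (-(lam ω - 1) * Δt))) := by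
    intro j
    have : Measurable (fun x : ℝ => ENNReal.ofReal (x ^ j * Real.exp (-(x - 1) * Δt))) := by
      fun_prop
    exact this.comp hlam
  constructor
  · rw [aux_key hm Q N hN hind
      (fun j ω => W ω * ENNReal.ofReal (lam ω ^ j * Real.exp (-(lam ω - 1) * Δt)))
      (fun j => hW.mul (hL j)), hlaw]
    refine lintegral_congr fun ω => ?_
    simp_rw [mul_left_comm _ (W ω)]
    rw [ENNReal.tsum_mul_left, aux_sum_one Δt _ hΔt (hpos ω), mul_one]
  · rw [aux_key hm Q N hN hind
      (fun j ω => W ω * (ENNReal.ofReal (lam ω ^ j * Real.exp (-(lam ω - 1) * Δt)) * (j : ℝ≥0∞)))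
      (fun j => hW.mul ((hL j).mul measurable_const)), hlaw]
    refine lintegral_congr fun ω => ?_
    simp_rw [mul_left_comm _ (W ω)]
    rw [ENNReal.tsum_mul_left, aux_sum_mean Δt _ hΔt (hpos ω)]

/-- Discrete-time analogue of the second assertion of Theorem 1 of the paper: under the
changed measure `dP = Z_n dQ`, with `Z_n = ∏_{k=1}^n λ_k^{N_k} exp(−(λ_k−1)Δt)`, the
compensated process `M_k = ∑_{i=1}^k (N_i − λ_i·Δt)`, `0 ≤ k ≤ n`, is a martingale with
respect to the filtration `F` under `P`. -/
theorem innovation_martingale_under_new_measure {Ω : Type*} [m0 : MeasurableSpace Ω]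
    (Q : Measure Ω) [IsProbabilityMeasure Q] (F : Filtration ℕ m0)
    (Δt : ℝ) (hΔt : 0 < Δt)
    (N : ℕ → Ω → ℕ)
    (hNmeas : ∀ k, 1 ≤ k → Measurable[F k] (N k))
    (hNindep : ∀ k, 1 ≤ k →
      Indep (MeasurableSpace.comap (N k) inferInstance) (F (k - 1)) Q)
    (hNlaw : ∀ k, 1 ≤ k → Q.map (N k) = poissonMeasure Δt.toNNReal)
    (C : ℝ) (lam : ℕ → Ω → ℝ)
    (hlammeas : ∀ k, 1 ≤ k → Measurable[F (k - 1)] (lam k))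
    (hlampos : ∀ k, 1 ≤ k → ∀ ω, 0 < lam k ω)
    (hlambdd : ∀ k, 1 ≤ k → ∀ ω, lam k ω ≤ C)
    (n : ℕ) (hn : 1 ≤ n)
    (Zn : Ω → ℝ)
    (hZn : ∀ ω, Zn ω =
      ∏ k ∈ Finset.Icc 1 n, lam k ω ^ N k ω * Real.exp (-(lam k ω - 1) * Δt))
    (P : Measure Ω) (hP : P = Q.withDensity (fun ω => ENNReal.ofReal (Zn ω)))
    (M : ℕ → Ω → ℝ)
    (hM : ∀ k ω, M k ω = ∑ i ∈ Finset.Icc 1 k, ((N i ω : ℝ) - lam i ω * Δt)) :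
    (∀ k, k ≤ n → StronglyMeasurable[F k] (M k)) ∧
    (∀ k, k ≤ n → Integrable (M k) P) ∧
    (∀ k, k + 1 ≤ n → P[M (k + 1) | F k] =ᵐ[P] M k) := by
  classical
  set L : ℕ → Ω → ℝ≥0∞ := fun k ω =>
    ENNReal.ofReal (lam k ω ^ N k ω * Real.exp (-(lam k ω - 1) * Δt)) with hLdef
  have hlamF : ∀ i k, 1 ≤ i → i ≤ k + 1 → Measurable[F k] (lam i) := fun i k hi hik =>
    (hlammeas i hi).mono (F.mono (by omega)) le_rfl
  have hNF : ∀ i k, 1 ≤ i → i ≤ k → Measurable[F k] (N i) := fun i k hi hik =>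
    (hNmeas i hi).mono (F.mono hik) le_rfl
  have hN0 : ∀ i, 1 ≤ i → Measurable (N i) := fun i hi => (hNmeas i hi).mono (F.le i) le_rfl
  have hlam0 : ∀ i, 1 ≤ i → Measurable (lam i) := fun i hi =>
    (hlammeas i hi).mono (F.le _) le_rfl
  have hLF : ∀ i k, 1 ≤ i → i ≤ k → Measurable[F k] (L i) := by
    intro i k hi hik
    have h : Measurable (fun x : ℝ × ℕ =>
        ENNReal.ofReal (x.1 ^ x.2 * Real.exp (-(x.1 - 1) * Δt))) := by fun_prop
    exact h.comp ((hlamF i k hi (by omega)).prodMk (hNF i k hi hik))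
  set Z : ℕ → Ω → ℝ≥0∞ := fun k ω => ∏ i ∈ Finset.Icc 1 k, L i ω with hZdef
  have hZF : ∀ k, Measurable[F k] (Z k) := by
    intro k
    refine Finset.measurable_fun_prod _ fun i hi => ?_
    rw [Finset.mem_Icc] at hi
    exact hLF i k hi.1 hi.2
  have hZsucc : ∀ k ω, Z (k + 1) ω = Z k ω * L (k + 1) ω := by
    intro k ω
    simp only [hZdef]
    rw [Finset.prod_Icc_succ_top (by omega)]
  have hZn' : (fun ω => ENNReal.ofReal (Zn ω)) = Z n := by
    funext ω
    rw [hZn, ENNReal.ofReal_prod_of_nonneg]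
    intro i hi
    rw [Finset.mem_Icc] at hi
    have := hlampos i hi.1 ω
    positivity
  rw [hZn'] at hP
  have hZ0 : ∀ k, Measurable (Z k) := fun k => (hZF k).mono (F.le k) le_rfl
  have hstep : ∀ k (W : Ω → ℝ≥0∞), Measurable[F k] W →
      (∫⁻ ω, W ω * L (k + 1) ω ∂Q = ∫⁻ ω, W ω ∂Q) ∧
      (∫⁻ ω, W ω * (L (k + 1) ω * (N (k + 1) ω : ℝ≥0∞)) ∂Q
        = ∫⁻ ω, W ω * ENNReal.ofReal (lam (k + 1) ω * Δt) ∂Q) := by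
    intro k W hW
    exact aux_step (F.le k) Q (N (k + 1)) (hN0 _ (by omega)) (hNindep (k + 1) (by omega)) Δt hΔt
      (hNlaw (k + 1) (by omega)) (lam (k + 1)) (hlammeas (k + 1) (by omega))
      (hlampos (k + 1) (by omega)) W hW
  -- restriction of the density to an earlier time
  have hrestr : ∀ k (W : Ω → ℝ≥0∞), Measurable[F k] W → ∀ m, k ≤ m →
      ∫⁻ ω, W ω * Z m ω ∂Q = ∫⁻ ω, W ω * Z k ω ∂Q := by
    intro k W hW m hkm
    induction m, hkm using Nat.le_induction with
    | base => rfl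
    | succ m hkm ih =>
      rw [← ih]
      simp_rw [hZsucc, ← mul_assoc]
      exact (hstep m (fun ω => W ω * Z m ω) ((hW.mono (F.mono hkm) le_rfl).mul (hZF m))).1
  have hPint : ∀ k, k ≤ n → ∀ W : Ω → ℝ≥0∞, Measurable[F k] W →
      ∫⁻ ω, W ω ∂P = ∫⁻ ω, W ω * Z k ω ∂Q := by
    intro k hk W hW
    rw [hP, lintegral_withDensity_eq_lintegral_mul _ (hZ0 n) (hW.mono (F.le k) le_rfl),
      ← hrestr k W hW n hk]
    simp [mul_comm]
  have hprob : IsProbabilityMeasure P := by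
    constructor
    have := hPint 0 (by omega) (fun _ => 1) measurable_const
    simpa [hZdef] using this
  have hNmean : ∀ k, k + 1 ≤ n → ∀ W : Ω → ℝ≥0∞, Measurable[F k] W →
      ∫⁻ ω, W ω * (N (k + 1) ω : ℝ≥0∞) ∂P
        = ∫⁻ ω, W ω * ENNReal.ofReal (lam (k + 1) ω * Δt) ∂P := by
    intro k hk W hW
    have hNm : Measurable[F (k + 1)] (fun ω => (N (k + 1) ω : ℝ≥0∞)) :=
      (measurable_from_top (f := fun j : ℕ => (j : ℝ≥0∞))).comp (hNmeas (k + 1) (by omega))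
    have hlm : Measurable[F k] (fun ω => ENNReal.ofReal (lam (k + 1) ω * Δt)) :=
      (Measurable.comp (g := fun x : ℝ => ENNReal.ofReal (x * Δt)) (by fun_prop)
        (hlamF (k + 1) k (by omega) le_rfl))
    rw [hPint (k + 1) hk (fun ω => W ω * (N (k + 1) ω : ℝ≥0∞)) ((hW.mono (F.mono (by omega)) le_rfl).mul hNm),
      hPint k (by omega) (fun ω => W ω * ENNReal.ofReal (lam (k + 1) ω * Δt)) (hW.mul hlm)]
    have h := (hstep k (fun ω => W ω * Z k ω) (hW.mul (hZF k))).2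
    calc _ = ∫⁻ ω, W ω * Z k ω * (L (k + 1) ω * (N (k + 1) ω : ℝ≥0∞)) ∂Q := by
            refine lintegral_congr fun ω => ?_
            rw [hZsucc]; ring
      _ = _ := h
      _ = _ := by
            refine lintegral_congr fun ω => ?_
            ring
  have hCpos : ∀ i, 1 ≤ i → ∀ ω, 0 ≤ lam i ω * Δt := fun i hi ω =>
    mul_nonneg (hlampos i hi ω).le hΔt.le
  have hNR : ∀ i, 1 ≤ i → Measurable (fun ω => (N i ω : ℝ)) := fun i hi =>
    (measurable_from_top (f := fun j : ℕ => (j : ℝ))).comp (hN0 i hi)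
  have hlamint : ∀ i, 1 ≤ i → Integrable (fun ω => lam i ω * Δt) P := by
    intro i hi
    refine Integrable.of_bound ((hlam0 i hi).mul_const Δt).aestronglyMeasurable (C * Δt)
      (Filter.Eventually.of_forall fun ω => ?_)
    rw [Real.norm_of_nonneg (hCpos i hi ω)]
    exact mul_le_mul_of_nonneg_right (hlambdd i hi ω) hΔt.le
  have hNint : ∀ i, 1 ≤ i → i ≤ n → Integrable (fun ω => (N i ω : ℝ)) P := by
    intro i hi hin
    obtain ⟨k, rfl⟩ : ∃ k, i = k + 1 := ⟨i - 1, by omega⟩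
    refine ⟨(hNR _ hi).aestronglyMeasurable, ?_⟩
    rw [hasFiniteIntegral_iff_ofReal (Filter.Eventually.of_forall fun ω => Nat.cast_nonneg _)]
    have h := hNmean k hin (fun _ => 1) measurable_const
    simp only [one_mul] at h
    simp only [ENNReal.ofReal_natCast]
    rw [h, ← hasFiniteIntegral_iff_ofReal
      (Filter.Eventually.of_forall fun ω => hCpos _ hi ω)]
    exact (hlamint _ hi).2
  have hMeas : ∀ k, StronglyMeasurable[F k] (M k) := by
    intro k
    have : M k = fun ω => ∑ i ∈ Finset.Icc 1 k, ((N i ω : ℝ) - lam i ω * Δt) := funext (hM k)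
    rw [this]
    refine Measurable.stronglyMeasurable (Finset.measurable_fun_sum _ fun i hi => ?_)
    rw [Finset.mem_Icc] at hi
    have h : Measurable (fun x : ℝ × ℕ => (x.2 : ℝ) - x.1 * Δt) := by fun_prop
    exact h.comp ((hlamF i k hi.1 (by omega)).prodMk (hNF i k hi.1 hi.2))
  have hMint : ∀ k, k ≤ n → Integrable (M k) P := by
    intro k hk
    have : M k = fun ω => ∑ i ∈ Finset.Icc 1 k, ((N i ω : ℝ) - lam i ω * Δt) := funext (hM k)
    rw [this]
    refine integrable_finsetSum _ fun i hi => ?_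
    rw [Finset.mem_Icc] at hi
    exact (hNint i hi.1 (hi.2.trans hk)).sub (hlamint i hi.1)
  refine ⟨fun k _ => hMeas k, hMint, fun k hk => ?_⟩
  symm
  refine ae_eq_condExp_of_forall_setIntegral_eq (F.le k) (hMint _ hk)
    (fun s _ _ => (hMint k (by omega)).integrableOn) (fun s hs _ => ?_)
    (hMeas k).aestronglyMeasurable
  have hs0 : MeasurableSet s := F.le k s hs
  have h1 : (1 : ℕ) ≤ k + 1 := by omega
  have hMs : ∀ ω, M (k + 1) ω = M k ω + ((N (k + 1) ω : ℝ) - lam (k + 1) ω * Δt) := by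
    intro ω
    rw [hM, hM, Finset.sum_Icc_succ_top (by omega)]
  simp_rw [hMs]
  have hi1 := hNint (k + 1) h1 hk
  have hi2 := hlamint (k + 1) h1
  have hA : ∫ ω in s, M k ω + ((N (k + 1) ω : ℝ) - lam (k + 1) ω * Δt) ∂P
      = ∫ ω in s, M k ω ∂P + ∫ ω in s, ((N (k + 1) ω : ℝ) - lam (k + 1) ω * Δt) ∂P :=
    integral_add (hMint k (by omega)).integrableOn (hi1.sub hi2).integrableOn
  have hB : ∫ ω in s, ((N (k + 1) ω : ℝ) - lam (k + 1) ω * Δt) ∂P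
      = ∫ ω in s, (N (k + 1) ω : ℝ) ∂P - ∫ ω in s, lam (k + 1) ω * Δt ∂P :=
    integral_sub hi1.integrableOn hi2.integrableOn
  have hC : ∫ ω in s, (N (k + 1) ω : ℝ) ∂P = ∫ ω in s, lam (k + 1) ω * Δt ∂P := by
    rw [integral_eq_lintegral_of_nonneg_ae (Filter.Eventually.of_forall fun ω => Nat.cast_nonneg _)
        hi1.integrableOn.1,
      integral_eq_lintegral_of_nonneg_ae (Filter.Eventually.of_forall fun ω => hCpos _ h1 ω)
        hi2.integrableOn.1]
    congr 1
    have h := hNmean k hk (s.indicator fun _ => 1)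
      (Measurable.indicator measurable_const hs)
    rw [← lintegral_indicator hs0, ← lintegral_indicator hs0]
    have hconv : ∀ f : Ω → ℝ≥0∞, (fun ω => s.indicator (fun _ => (1 : ℝ≥0∞)) ω * f ω)
        = s.indicator f := by
      intro f; funext ω
      by_cases hω : ω ∈ s <;> simp [hω]
    rw [hconv, hconv] at h
    simpa only [ENNReal.ofReal_natCast] using h
  rw [hA, hB, hC, sub_self, add_zero]
end

section
/- Fix T > 0, finitely many jump times 0 < τ_1 < ⋯ < τ_n ≤ T, and a continuous function λ : [0,T] → ℝ with λ(s) > 0 for all s. Let Z_t := (∏_{i : τ_i ≤ t} λ(τ_i)) · exp(−∫₀ᵗ (λ(s) − 1) ds) and Z_{τ_i⁻} := (∏_{j < i} λ(τ_j)) · exp(−∫₀^{τ_i} (λ(s) − 1) ds); note Z_t > 0 for all t. Then for every t ∈ [0,T], Z_t^{−1} = 1 − ∑_{i : τ_i ≤ t} (λ(τ_i) − 1) / (λ(τ_i) · Z_{τ_i⁻}) + ∫₀ᵗ (λ(s) − 1) · Z_s^{−1} ds. (This is the pathwise form of the key identity of Appendix A of the paper, Ẑ_t^{−1} = 1 − ∫₀ᵗ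 ((λ̂_s − 1)/(λ̂_s Ẑ_{s−})) (dY_s − λ̂_s ds), obtained there by applying Itô's formula for semimartingales to f(x) = 1/x.) -/
open MeasureTheory Finset

lemma jef_piece (g : ℝ → ℝ) (hg : Continuous g) (a t c : ℝ) (ha : 0 < a) (ht : 0 ≤ t) :
    IntervalIntegrable (fun s => if a ≤ s then c * g s else 0) volume 0 t ∧
    (∫ s in (0:ℝ)..t, (if a ≤ s then c * g s else 0)) =
      if a ≤ t then c * ∫ s in a..t, g s else 0 := by
  have he : (fun s => if a ≤ s then c * g s else 0) =
      (Set.Ici a).indicator (fun s => c * g s) := by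
    ext s; simp [Set.indicator_apply]
  have hc : Continuous (fun s => c * g s) := continuous_const.mul hg
  rw [he]
  constructor
  · rw [intervalIntegrable_iff_integrableOn_Ioc_of_le ht]
    exact Integrable.indicator ((hc.intervalIntegrable 0 t).1) measurableSet_Ici
  · rw [intervalIntegral.integral_of_le ht, setIntegral_indicator measurableSet_Ici]
    have h1 : Set.Ioc 0 t ∩ Set.Ici a = Set.Icc a t := by
      ext s; simp only [Set.mem_inter_iff, Set.mem_Ioc, Set.mem_Ici, Set.mem_Icc]
      constructor
      · rintro ⟨⟨_, h⟩, h'⟩; exact ⟨h', h⟩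
      · rintro ⟨h', h⟩; exact ⟨⟨by linarith, h⟩, h'⟩
    rw [h1]
    split_ifs with h
    · rw [integral_Icc_eq_integral_Ioc, ← intervalIntegral.integral_of_le h,
        intervalIntegral.integral_const_mul]
    · rw [Set.Icc_eq_empty h]; simp

lemma jef_prod (n : ℕ) (τ : Fin n → ℝ) (hτ : StrictMono τ) (b : Fin n → ℝ) (t : ℝ) :
    ∏ i ∈ Finset.univ.filter (fun i => τ i ≤ t), b i =
      1 + ∑ i, if τ i ≤ t then
        (b i - 1) * ∏ j ∈ Finset.univ.filter (fun j => j < i), b j else 0 := by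
  have h := Finset.prod_add_ordered (Finset.univ.filter (fun i => τ i ≤ t))
    (fun _ => (1:ℝ)) (fun i => b i - 1)
  simp only [add_sub_cancel, Finset.prod_const_one, mul_one] at h
  rw [h, ← Finset.sum_filter]
  congr 1
  refine Finset.sum_congr rfl fun i hi => ?_
  congr 1
  refine Finset.prod_congr ?_ fun _ _ => rfl
  ext j
  simp only [Finset.mem_filter, Finset.mem_univ, true_and] at hi ⊢
  exact ⟨fun h => h.2, fun h => ⟨(hτ h).le.trans hi, h⟩⟩

/-- Pathwise form of the key identity of Appendix A of the paper,
`Ẑ_t⁻¹ = 1 − ∫₀ᵗ ((λ̂_s − 1)/(λ̂_s Ẑ_{s−})) (dY_s − λ̂_s ds)`: for the jump exponential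
`Z_t = (∏_{τ_i ≤ t} λ(τ_i)) · exp(−∫₀ᵗ (λ(s)−1) ds)` (which is strictly positive),
`Z_t⁻¹ = 1 − ∑_{τ_i ≤ t} (λ(τ_i) − 1)/(λ(τ_i) Z_{τ_i⁻}) + ∫₀ᵗ (λ(s)−1) Z_s⁻¹ ds`. -/
theorem jump_exponential_inverse_formula
    (T : ℝ) (hT : 0 < T) (n : ℕ) (τ : Fin n → ℝ) (hτmono : StrictMono τ)
    (hτpos : ∀ i, 0 < τ i) (hτle : ∀ i, τ i ≤ T)
    (lam : ℝ → ℝ) (hlamcont : ContinuousOn lam (Set.Icc 0 T))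
    (hlampos : ∀ s ∈ Set.Icc (0:ℝ) T, 0 < lam s)
    (Z : ℝ → ℝ) (Zm : Fin n → ℝ)
    (hZ : ∀ t, Z t = (∏ i ∈ Finset.univ.filter (fun i => τ i ≤ t), lam (τ i)) *
      Real.exp (-(∫ s in (0:ℝ)..t, (lam s - 1))))
    (hZm : ∀ i, Zm i = (∏ j ∈ Finset.univ.filter (fun j => j < i), lam (τ j)) *
      Real.exp (-(∫ s in (0:ℝ)..(τ i), (lam s - 1)))) :
    (∀ t ∈ Set.Icc (0:ℝ) T, 0 < Z t) ∧
    ∀ t ∈ Set.Icc (0:ℝ) T,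
      (Z t)⁻¹ = 1 - (∑ i ∈ Finset.univ.filter (fun i => τ i ≤ t),
          (lam (τ i) - 1) / (lam (τ i) * Zm i)) +
        ∫ s in (0:ℝ)..t, (lam s - 1) * (Z s)⁻¹ := by
  have hpos : ∀ t ∈ Set.Icc (0:ℝ) T, 0 < Z t := by
    intro t _
    rw [hZ]
    exact mul_pos (Finset.prod_pos fun i _ => hlampos _ ⟨(hτpos i).le, hτle i⟩) (Real.exp_pos _)
  refine ⟨hpos, fun t ht => ?_⟩
  set L : ℝ → ℝ := Set.IccExtend hT.le ((Set.Icc 0 T).domRestrict lam) with hL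
  have hLc : Continuous L := (continuousOn_iff_continuous_domRestrict.1 hlamcont).Icc_extend'
  have hLe : ∀ s ∈ Set.Icc (0:ℝ) T, L s = lam s := fun s hs => by
    rw [hL, Set.IccExtend_of_mem _ _ hs]; rfl
  set E : ℝ → ℝ := fun t => Real.exp (∫ s in (0:ℝ)..t, (L s - 1)) with hE
  have hL1 : Continuous (fun s => L s - 1) := hLc.sub continuous_const
  have hEd : ∀ x, HasDerivAt E ((L x - 1) * E x) x := fun x => by
    have := (intervalIntegral.integral_hasDerivAt_right (hL1.intervalIntegrable 0 x)
      hL1.aestronglyMeasurable.stronglyMeasurableAtFilter hL1.continuousAt).exp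
    rw [mul_comm]; exact this
  have hEc : Continuous E := continuous_iff_continuousAt.2 fun x => (hEd x).continuousAt
  have hgc : Continuous (fun s => (L s - 1) * E s) := hL1.mul hEc
  have hFTC : ∀ a b, ∫ s in a..b, (L s - 1) * E s = E b - E a := fun a b =>
    intervalIntegral.integral_eq_sub_of_hasDerivAt (fun x _ => hEd x) (hgc.intervalIntegrable a b)
  have hIe : ∀ s ∈ Set.Icc (0:ℝ) T,
      Real.exp (-(∫ u in (0:ℝ)..s, (lam u - 1))) = (E s)⁻¹ := fun s hs => by
    rw [Real.exp_neg, hE]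
    congr 2
    refine intervalIntegral.integral_congr fun u hu => ?_
    rw [Set.uIcc_of_le hs.1] at hu
    simp only [hLe u ⟨hu.1, hu.2.trans hs.2⟩]
  set c : Fin n → ℝ := fun i => ((lam (τ i))⁻¹ - 1) *
    ∏ j ∈ Finset.univ.filter (fun j => j < i), (lam (τ j))⁻¹ with hc
  have hZi : ∀ s ∈ Set.Icc (0:ℝ) T,
      (Z s)⁻¹ = (1 + ∑ i, if τ i ≤ s then c i else 0) * E s := fun s hs => by
    rw [hZ, hIe s hs, mul_inv, inv_inv, ← Finset.prod_inv_distrib,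
      jef_prod n τ hτmono (fun i => (lam (τ i))⁻¹) s]
  have hint : ∫ s in (0:ℝ)..t, (lam s - 1) * (Z s)⁻¹ =
      ∫ s in (0:ℝ)..t, ((L s - 1) * E s +
        ∑ i, if τ i ≤ s then c i * ((L s - 1) * E s) else 0) := by
    refine intervalIntegral.integral_congr fun s hs => ?_
    rw [Set.uIcc_of_le ht.1] at hs
    have hs' : s ∈ Set.Icc (0:ℝ) T := ⟨hs.1, hs.2.trans ht.2⟩
    simp only [hZi s hs', ← hLe s hs']
    have : ∀ i, (if τ i ≤ s then c i * ((L s - 1) * E s) else 0) =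
        (if τ i ≤ s then c i else 0) * ((L s - 1) * E s) := fun i => by
      split_ifs <;> simp
    simp only [this, ← Finset.sum_mul]
    ring
  have hp := fun i => jef_piece _ hgc (τ i) t (c i) (hτpos i) ht.1
  have hE0 : E 0 = 1 := by simp [hE]
  rw [hint, intervalIntegral.integral_add (hgc.intervalIntegrable 0 t)
      (by
        have := IntervalIntegrable.sum (μ := volume) (a := 0) (b := t) Finset.univ
          (fun i _ => (hp i).1)
        have he : (fun s => ∑ i, if τ i ≤ s then c i * ((L s - 1) * E s) else 0) =
            ∑ i, (fun s => if τ i ≤ s then c i * ((L s - 1) * E s) else 0) := by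
          ext s; simp only [Finset.sum_apply]
        rw [he]; exact this),
    intervalIntegral.integral_finsetSum (fun i _ => (hp i).1), hFTC, hE0, hZi t ht,
    Finset.sum_filter]
  simp only [(hp _).2, hFTC]
  have hterm : ∀ i, (lam (τ i) - 1) / (lam (τ i) * Zm i) = - (c i * E (τ i)) := fun i => by
    have hi : τ i ∈ Set.Icc (0:ℝ) T := ⟨(hτpos i).le, hτle i⟩
    have h0 := (hlampos _ hi).ne'
    rw [hZm, hIe _ hi, hc]
    simp only [Finset.prod_inv_distrib]
    rw [div_eq_mul_inv, mul_inv, mul_inv, inv_inv]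
    have : (lam (τ i) - 1) * (lam (τ i))⁻¹ = -((lam (τ i))⁻¹ - 1) := by
      field_simp; ring
    rw [← mul_assoc, this]; ring
  simp only [hterm]
  have hs : ∑ i, (if τ i ≤ t then c i * (E t - E (τ i)) else 0) =
      (∑ i, if τ i ≤ t then c i else 0) * E t +
        ∑ i, if τ i ≤ t then -(c i * E (τ i)) else 0 := by
    rw [Finset.sum_mul, ← Finset.sum_add_distrib]
    refine Finset.sum_congr rfl fun i _ => ?_
    split_ifs <;> ring
  rw [hs]; ring
end
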